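/- (Proposition 3.2, comparison principle for the finite-difference infinity-Laplacian.) Let d ≥ 1, let Ω ⊆ ℝ^d be a bounded open set, let ε > 0 with Ω_ε nonempty, and let C ≥ 0. Suppose u, v : closure(Ω_ε) → ℝ are continuous and satisfy −Δ_∞^ε u(x) ≤ C ≤ −Δ_∞^ε v(x) for all x ∈ Ω_{2ε}. Then sup_{closure(Ω_ε)} (u − v) = sup_{closure(Ω_ε) \ Ω_{2ε}} (u − v). -/

import Mathlib

open Metric Real Set Filter

noncomputable section

/-- The inner parallel set `Ω_ε = {x ∈ Ω : dist(x, ∂Ω) > ε}`. -/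
def innerSet {d : ℕ} (Ω : Set (EuclideanSpace ℝ (Fin d))) (ε : ℝ) :
    Set (EuclideanSpace ℝ (Fin d)) :=
  {x ∈ Ω | ε < Metric.infDist x (frontier Ω)}

/-- Upper envelope `u^ε(x) = sup_{y ∈ B(x;ε)} u(y)`. -/
def upperEnv {d : ℕ} (u : EuclideanSpace ℝ (Fin d) → ℝ) (ε : ℝ)
    (x : EuclideanSpace ℝ (Fin d)) : ℝ :=
  sSup (u '' Metric.closedBall x ε)

/-- Lower envelope `u_ε(x) = inf_{y ∈ B(x;ε)} u(y)`. -/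
def lowerEnv {d : ℕ} (u : EuclideanSpace ℝ (Fin d) → ℝ) (ε : ℝ)
    (x : EuclideanSpace ℝ (Fin d)) : ℝ :=
  sInf (u '' Metric.closedBall x ε)

/-- Finite-difference infinity-Laplacian `Δ_∞^ε u(x) = (u^ε(x) + u_ε(x) - 2u(x))/ε²`. -/
def nlInfLap {d : ℕ} (u : EuclideanSpace ℝ (Fin d) → ℝ) (ε : ℝ)
    (x : EuclideanSpace ℝ (Fin d)) : ℝ :=
  (upperEnv u ε x + lowerEnv u ε x - 2 * u x) / ε ^ 2

/-- Lower ε-slope `S_-^ε u(x) = (u(x) - u_ε(x))/ε`. -/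
def lowerSlope {d : ℕ} (u : EuclideanSpace ℝ (Fin d) → ℝ) (ε : ℝ)
    (x : EuclideanSpace ℝ (Fin d)) : ℝ :=
  (u x - lowerEnv u ε x) / ε

/-- Supremum norm of `u` over the set `S`. -/
def supNorm {d : ℕ} (S : Set (EuclideanSpace ℝ (Fin d)))
    (u : EuclideanSpace ℝ (Fin d) → ℝ) : ℝ :=
  sSup ((fun x => |u x|) '' S)

/-- `u` satisfies comparison with `β`-cones on `Ω`. -/
def ComparisonWithCones {d : ℕ} (Ω : Set (EuclideanSpace ℝ (Fin d))) (β : ℝ)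
    (u : EuclideanSpace ℝ (Fin d) → ℝ) : Prop :=
  ∀ D : Set (EuclideanSpace ℝ (Fin d)), IsOpen D → closure D ⊆ Ω →
    ∀ a : ℝ, 0 ≤ a → ∀ x₀ : EuclideanSpace ℝ (Fin d), x₀ ∉ D → ∀ x ∈ D,
      sInf ((fun ξ => u ξ - a * ‖ξ - x₀‖ ^ β) '' frontier D) ≤ u x - a * ‖x - x₀‖ ^ β ∧
      u x - a * ‖x - x₀‖ ^ β ≤ sSup ((fun ξ => u ξ - a * ‖ξ - x₀‖ ^ β) '' frontier D)

/-!
Let `M = max (u - v)`, and let `x` be a point with `u x - v x = M` at which `u` is smallest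
among all such points. Over the `ε`-ball of `x`, the upper and the lower envelope of `u` exceed
those of `v` by at most `M`, so `Δu x ≥ Δv x` forces equality in both. In particular the minimum
of `v` over the ball is attained where `u - v = M`, and by the choice of `x` it is `v x`; then
`Δv x ≤ 0` makes `v`, and hence `u`, constant on the ball. If every maximizer of `u - v` were in
`Ω_{2ε}`, the points `x` chosen in this way would form a nonempty compact open set,
contradicting connectedness. When `Δu ≥ 0` instead, exchange `(u, v)` for `(-v, -u)`.
-/

theorem isCompact_setOf_isMaxOn {X β : Type*} [TopologicalSpace X] [T2Space X] [LinearOrder β]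
    [TopologicalSpace β] [ClosedIciTopology β] {f : X → β} {K : Set X} (hK : IsCompact K)
    (hf : ContinuousOn f K) : IsCompact {x ∈ K | IsMaxOn f K x} := by
  rcases K.eq_empty_or_nonempty with rfl | hne
  · simp
  obtain ⟨x₀, hx₀, hmax⟩ := hK.exists_isMaxOn hne hf
  have hsuperlevel : {x ∈ K | IsMaxOn f K x} = K ∩ f ⁻¹' Ici (f x₀) :=
    Set.ext fun _ => and_congr_right fun _ => ⟨fun h => h hx₀, fun h _ hy => (hmax hy).trans h⟩
  rw [hsuperlevel]
  exact hK.of_isClosed_subset (hf.preimage_isClosed_of_isClosed hK.isClosed isClosed_Ici)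
    inter_subset_left

theorem isCompact_setOf_isMinOn {X β : Type*} [TopologicalSpace X] [T2Space X] [LinearOrder β]
    [TopologicalSpace β] [ClosedIicTopology β] {f : X → β} {K : Set X} (hK : IsCompact K)
    (hf : ContinuousOn f K) : IsCompact {x ∈ K | IsMinOn f K x} :=
  isCompact_setOf_isMaxOn (β := βᵒᵈ) hK hf

section SecondDifference

open scoped Topology

variable {X : Type*}

/-- The unnormalized finite-difference infinity-Laplacian at `x`, with an arbitrary set `B` in place
of the ball over which the envelopes are taken. -/
def secondDiff (u : X → ℝ) (B : Set X) (x : X) : ℝ :=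
  sSup (u '' B) + sInf (u '' B) - 2 * u x

theorem secondDiff_neg (u : X → ℝ) (B : Set X) (x : X) :
    secondDiff (-u) B x = -secondDiff u B x := by
  have himage : (-u) '' B = -(u '' B) := by
    rw [← image_neg_eq_neg, image_image]
    rfl
  rw [secondDiff, secondDiff, himage, Real.sSup_neg, Real.sInf_neg, Pi.neg_apply]
  ring

variable [TopologicalSpace X] {u v : X → ℝ}

theorem eq_and_eq_of_secondDiff_le {B : Set X} {x y : X} (hB : IsCompact B)
    (hu : ContinuousOn u B) (hv : ContinuousOn v B)
    (hle : secondDiff v B x ≤ secondDiff u B x) (hv_nonpos : secondDiff v B x ≤ 0)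
    (hmax : ∀ z ∈ B, u z - v z ≤ u x - v x)
    (hmin : ∀ z ∈ B, u z - v z = u x - v x → u x ≤ u z) (hy : y ∈ B) :
    u y = u x ∧ v y = v x := by
  have hu_sSup : ∀ z ∈ B, u z ≤ sSup (u '' B) := fun z hz =>
    le_csSup (hB.bddAbove_image hu) (mem_image_of_mem u hz)
  have hu_sInf : ∀ z ∈ B, sInf (u '' B) ≤ u z := fun z hz =>
    csInf_le (hB.bddBelow_image hu) (mem_image_of_mem u hz)
  have hv_sSup : ∀ z ∈ B, v z ≤ sSup (v '' B) := fun z hz =>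
    le_csSup (hB.bddAbove_image hv) (mem_image_of_mem v hz)
  have hv_sInf : ∀ z ∈ B, sInf (v '' B) ≤ v z := fun z hz =>
    csInf_le (hB.bddBelow_image hv) (mem_image_of_mem v hz)
  obtain ⟨q, hq, hvq⟩ := hB.exists_sInf_image_eq ⟨y, hy⟩ hv
  have hsSup_le : sSup (u '' B) ≤ sSup (v '' B) + (u x - v x) :=
    csSup_le ⟨u y, mem_image_of_mem u hy⟩ <| forall_mem_image.2 fun z hz => by
      linarith [hmax z hz, hv_sSup z hz]
  rw [secondDiff, secondDiff] at hle
  rw [secondDiff] at hv_nonpos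
  -- `hsSup_le` and `sInf (u '' B) ≤ u q` add up to the reverse of `hle`, so both are equalities.
  have hq_max : u q - v q = u x - v x := by linarith [hmax q hq, hu_sInf q hq]
  have hu_min : u x ≤ sInf (u '' B) := by linarith [hmin q hq hq_max]
  have hv_min : v x ≤ sInf (v '' B) := by linarith [hmin q hq hq_max]
  constructor
  · linarith [hu_sSup y hy, hu_sInf y hy]
  · linarith [hv_sSup y hy, hv_sInf y hy]

variable [T2Space X] [PreconnectedSpace X] {B : X → Set X} {K U : Set X}

theorem exists_mem_sdiff_isMaxOn_sub (hK : IsCompact K) (hne : K.Nonempty) (hU : U ≠ univ)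
    (hB : ∀ x ∈ U, IsCompact (B x)) (hB_nhds : ∀ x ∈ U, B x ∈ 𝓝 x) (hBK : ∀ x ∈ U, B x ⊆ K)
    (hu : ContinuousOn u K) (hv : ContinuousOn v K)
    (hle : ∀ x ∈ U, secondDiff v (B x) x ≤ secondDiff u (B x) x)
    (hv_nonpos : ∀ x ∈ U, secondDiff v (B x) x ≤ 0) :
    ∃ x ∈ K \ U, IsMaxOn (u - v) K x := by
  by_contra! hcon
  let E := {x ∈ K | IsMaxOn (u - v) K x}
  let F := {x ∈ E | IsMinOn u E x}
  have hEU : E ⊆ U := fun x hx => by_contra fun hxU => hcon x ⟨hx.1, hxU⟩ hx.2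
  have hE : IsCompact E := isCompact_setOf_isMaxOn hK (hu.sub hv)
  have huE : ContinuousOn u E := hu.mono (sep_subset _ _)
  have hF : IsCompact F := isCompact_setOf_isMinOn hE huE
  have hF_nonempty : F.Nonempty := hE.exists_isMinOn (hK.exists_isMaxOn hne (hu.sub hv)) huE
  have hBF : ∀ x ∈ F, B x ⊆ F := by
    rintro x ⟨hxE, hx_min⟩ y hy
    have hxU := hEU hxE
    have hmin : ∀ z ∈ B x, u z - v z = u x - v x → u x ≤ u z := fun z hz hzx =>
      hx_min ⟨hBK x hxU hz, fun w hw => (hxE.2 hw).trans_eq hzx.symm⟩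
    obtain ⟨huy, hvy⟩ := eq_and_eq_of_secondDiff_le (hB x hxU) (hu.mono (hBK x hxU))
      (hv.mono (hBK x hxU)) (hle x hxU) (hv_nonpos x hxU) (fun z hz => hxE.2 (hBK x hxU hz))
      hmin hy
    have hsub : (u - v) y = (u - v) x := by rw [Pi.sub_apply, Pi.sub_apply, huy, hvy]
    exact ⟨⟨hBK x hxU hy, fun w hw => (hxE.2 hw).trans_eq hsub.symm⟩,
      fun w hw => huy.trans_le (hx_min hw)⟩
  have hF_open : IsOpen F := isOpen_iff_mem_nhds.2 fun x hx =>
    mem_of_superset (hB_nhds x (hEU hx.1)) (hBF x hx)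
  have hF_univ : F = univ := IsClopen.eq_univ ⟨hF.isClosed, hF_open⟩ hF_nonempty
  exact hU (univ_subset_iff.1 (hF_univ.ge.trans ((sep_subset _ _).trans hEU)))

theorem sSup_image_sub_eq_of_secondDiff_le (hK : IsCompact K) (hne : K.Nonempty) (hU : U ≠ univ)
    (hB : ∀ x ∈ U, IsCompact (B x)) (hB_nhds : ∀ x ∈ U, B x ∈ 𝓝 x) (hBK : ∀ x ∈ U, B x ⊆ K)
    (hu : ContinuousOn u K) (hv : ContinuousOn v K)
    (hle : ∀ x ∈ U, secondDiff v (B x) x ≤ secondDiff u (B x) x)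
    (hsign : (∀ x ∈ U, secondDiff v (B x) x ≤ 0) ∨ ∀ x ∈ U, 0 ≤ secondDiff u (B x) x) :
    sSup ((u - v) '' K) = sSup ((u - v) '' (K \ U)) := by
  obtain ⟨x, hx, hmax⟩ : ∃ x ∈ K \ U, IsMaxOn (u - v) K x := by
    rcases hsign with hv_nonpos | hu_nonneg
    · exact exists_mem_sdiff_isMaxOn_sub hK hne hU hB hB_nhds hBK hu hv hle hv_nonpos
    · rw [← neg_sub_neg v u]
      refine exists_mem_sdiff_isMaxOn_sub hK hne hU hB hB_nhds hBK hv.neg hu.neg ?_ ?_ <;>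
        simpa only [secondDiff_neg, neg_le_neg_iff, Left.neg_nonpos_iff]
  rw [sSup_image', sSup_image', hmax.iSup_eq hx.1, (hmax.on_subset sdiff_subset).iSup_eq hx]

end SecondDifference

theorem closedBall_subset_of_lt_infDist_frontier {E : Type*} [NormedAddCommGroup E]
    [NormedSpace ℝ E] [FiniteDimensional ℝ E] {s : Set E} {x : E} {r : ℝ} (hx : x ∈ s)
    (hr : r < infDist x (frontier s)) : closedBall x r ⊆ s := by
  rcases eq_or_ne s univ with rfl | hs
  · exact subset_univ _
  obtain ⟨y, hy, hxy⟩ := exists_mem_frontier_infDist_compl_eq_dist hx hs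
  have hr_compl : r < infDist x sᶜ := hr.trans_le (hxy ▸ infDist_le_dist_of_mem hy)
  exact (closedBall_subset_ball hr_compl).trans ball_infDist_compl_subset

section InnerSet

variable {d : ℕ} {Ω : Set (EuclideanSpace ℝ (Fin d))} {ε : ℝ}

theorem innerSet_subset : innerSet Ω ε ⊆ Ω :=
  sep_subset _ _

theorem innerSet_ne_univ (hε : 0 ≤ ε) : innerSet Ω ε ≠ univ := by
  intro h
  have hΩ : Ω = univ := univ_subset_iff.1 (h.ge.trans innerSet_subset)
  have hlt : ε < infDist 0 (frontier Ω) := (h.ge (mem_univ 0)).2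
  rw [hΩ, frontier_univ, infDist_empty] at hlt
  exact hlt.not_ge hε

theorem closedBall_subset_innerSet {δ : ℝ} {x : EuclideanSpace ℝ (Fin d)} (hε : 0 ≤ ε)
    (hx : x ∈ innerSet Ω (δ + ε)) : closedBall x δ ⊆ innerSet Ω ε := by
  intro y hy
  refine ⟨closedBall_subset_of_lt_infDist_frontier hx.1 (by linarith [hx.2]) hy, ?_⟩
  have hdist := mem_closedBall'.1 hy
  linarith [hx.2, infDist_le_infDist_add_dist (x := x) (y := y) (s := frontier Ω)]

end InnerSet

theorem nlInfLap_eq_secondDiff_div {d : ℕ} (u : EuclideanSpace ℝ (Fin d) → ℝ) (ε : ℝ)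
    (x : EuclideanSpace ℝ (Fin d)) :
    nlInfLap u ε x = secondDiff u (closedBall x ε) x / ε ^ 2 :=
  rfl

theorem stmt4_general {d : ℕ} {Ω : Set (EuclideanSpace ℝ (Fin d))} (hΩb : Bornology.IsBounded Ω)
    {ε : ℝ} (hε : 0 < ε) (hne : (innerSet Ω ε).Nonempty) {u v : EuclideanSpace ℝ (Fin d) → ℝ}
    (hu : ContinuousOn u (closure (innerSet Ω ε)))
    (hv : ContinuousOn v (closure (innerSet Ω ε)))
    (hle : ∀ x ∈ innerSet Ω (2 * ε), nlInfLap v ε x ≤ nlInfLap u ε x)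
    (hsign : (∀ x ∈ innerSet Ω (2 * ε), nlInfLap v ε x ≤ 0) ∨
      ∀ x ∈ innerSet Ω (2 * ε), 0 ≤ nlInfLap u ε x) :
    sSup ((fun x => u x - v x) '' closure (innerSet Ω ε)) =
      sSup ((fun x => u x - v x) '' (closure (innerSet Ω ε) \ innerSet Ω (2 * ε))) := by
  have hε_sq : 0 < ε ^ 2 := pow_pos hε 2
  have hball : ∀ x ∈ innerSet Ω (2 * ε), closedBall x ε ⊆ closure (innerSet Ω ε) := fun x hx =>
    (closedBall_subset_innerSet hε.le (two_mul ε ▸ hx)).trans subset_closure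
  simp only [nlInfLap_eq_secondDiff_div, div_le_div_iff_of_pos_right hε_sq] at hle
  simp only [nlInfLap_eq_secondDiff_div, div_le_iff₀ hε_sq, le_div_iff₀ hε_sq, zero_mul] at hsign
  exact sSup_image_sub_eq_of_secondDiff_le (hΩb.subset innerSet_subset).isCompact_closure
    hne.closure (innerSet_ne_univ (by positivity)) (fun x _ => isCompact_closedBall x ε)
    (fun x _ => closedBall_mem_nhds x hε) hball hu hv hle hsign

/-- Proposition 3.2: comparison principle for the finite-difference
infinity-Laplacian. -/
theorem stmt4 {d : ℕ} (hd : 1 ≤ d) (Ω : Set (EuclideanSpace ℝ (Fin d)))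
    (hΩb : Bornology.IsBounded Ω) (hΩo : IsOpen Ω)
    (ε : ℝ) (hε : 0 < ε) (hne : (innerSet Ω ε).Nonempty)
    (C : ℝ) (hC : 0 ≤ C)
    (u v : EuclideanSpace ℝ (Fin d) → ℝ)
    (hu : ContinuousOn u (closure (innerSet Ω ε)))
    (hv : ContinuousOn v (closure (innerSet Ω ε)))
    (hcomp : ∀ x ∈ innerSet Ω (2 * ε), -(nlInfLap u ε x) ≤ C ∧ C ≤ -(nlInfLap v ε x)) :
    sSup ((fun x => u x - v x) '' closure (innerSet Ω ε)) =
      sSup ((fun x => u x - v x) '' (closure (innerSet Ω ε) \ innerSet Ω (2 * ε))) := by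
  exact stmt4_general hΩb hε hne hu hv (fun x hx => by linarith [hcomp x hx])
    (.inl fun x hx => by linarith [hcomp x hx])
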